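/- arXiv:1605.06182 — 9 statements merged into one kernel-verified Lean document; each statement's English description precedes it below -/
import Mathlib

section
/- The Stein divergence is invariant to inversion: for all n×n real symmetric positive definite matrices X and Y, δ_S²(X⁻¹, Y⁻¹) = δ_S²(X, Y). -/
open Matrix

/-- The Stein divergence `δ_S²(X,Y) = log det((X+Y)/2) − (1/2) log det(XY)`. -/
noncomputable def steinDiv {n : ℕ} (X Y : Matrix (Fin n) (Fin n) ℝ) : ℝ :=
  Real.log (((2 : ℝ)⁻¹ • (X + Y)).det) - (1 / 2) * Real.log ((X * Y).det)

section

variable {n : ℕ} {X Y : Matrix (Fin n) (Fin n) ℝ}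

theorem steinDiv_comm (X Y : Matrix (Fin n) (Fin n) ℝ) : steinDiv X Y = steinDiv Y X := by
  rw [steinDiv, steinDiv, add_comm X Y, det_mul_comm X Y]

theorem steinDiv_mul_mul {A B : Matrix (Fin n) (Fin n) ℝ} (hA : IsUnit A.det) (hB : IsUnit B.det)
    (hXY : (X * Y).det ≠ 0) (hadd : (X + Y).det ≠ 0) :
    steinDiv (A * X * B) (A * Y * B) = steinDiv X Y := by
  have hAB : A.det * B.det ≠ 0 := mul_ne_zero hA.ne_zero hB.ne_zero
  have hmean : ((2 : ℝ)⁻¹ • (X + Y)).det ≠ 0 := by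
    rw [det_smul]
    exact mul_ne_zero (pow_ne_zero _ (by norm_num)) hadd
  have det_mean : ((2 : ℝ)⁻¹ • (A * X * B + A * Y * B)).det =
      A.det * B.det * ((2 : ℝ)⁻¹ • (X + Y)).det := by
    rw [← add_mul, ← mul_add, ← Matrix.smul_mul, ← Matrix.mul_smul, det_mul, det_mul,
      mul_right_comm]
  have det_prod : (A * X * B * (A * Y * B)).det = (A.det * B.det) ^ 2 * (X * Y).det := by
    simp only [det_mul]
    ring
  rw [steinDiv, steinDiv, det_mean, det_prod, Real.log_mul hAB hmean,
    Real.log_mul (pow_ne_zero 2 hAB) hXY, Real.log_pow]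
  ring

-- Multiplying by `X⁻¹` on the left and `Y⁻¹` on the right sends `(X, Y)` to `(Y⁻¹, X⁻¹)`.
theorem steinDiv_inv_invariant_general (hXY : 0 < (X * Y).det) (hadd : 0 < (X + Y).det) :
    steinDiv X⁻¹ Y⁻¹ = steinDiv X Y := by
  obtain ⟨hX, hY⟩ : IsUnit X.det ∧ IsUnit Y.det := by
    rw [← IsUnit.mul_iff, ← det_mul]
    exact hXY.ne'.isUnit
  calc
    steinDiv X⁻¹ Y⁻¹ = steinDiv Y⁻¹ X⁻¹ := steinDiv_comm _ _
    _ = steinDiv (X⁻¹ * X * Y⁻¹) (X⁻¹ * Y * Y⁻¹) := by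
      rw [nonsing_inv_mul X hX, one_mul, mul_nonsing_inv_cancel_right Y X⁻¹ hY]
    _ = steinDiv X Y :=
      steinDiv_mul_mul (isUnit_nonsing_inv_det X hX) (isUnit_nonsing_inv_det Y hY)
        hXY.ne' hadd.ne'

end

/-- The Stein divergence is invariant to inversion: for symmetric positive definite
`X` and `Y`, `δ_S²(X⁻¹, Y⁻¹) = δ_S²(X, Y)`. -/
theorem steinDiv_inv_invariant {n : ℕ}
    (X Y : Matrix (Fin n) (Fin n) ℝ) (hX : X.PosDef) (hY : Y.PosDef) :
    steinDiv X⁻¹ Y⁻¹ = steinDiv X Y :=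
  steinDiv_inv_invariant_general (det_mul X Y ▸ mul_pos hX.det_pos hY.det_pos)
    (hX.add hY).det_pos
end

section
/- For all n×n real symmetric positive definite matrices X and Y, det((X+Y)/2) ≥ √(det X · det Y), with equality if and only if X = Y. -/
open Matrix

/-!
If `X + Y` is positive definite, a single congruence `A ↦ Sᴴ A S` turns `X + Y` into the identity
and `Y` into a diagonal matrix, hence it makes `X` diagonal as well. Congruence multiplies all
determinants by the same factor `|det S|²`, so the claim becomes the weighted AM-GM inequality
`cᵢ ^ a * dᵢ ^ b ≤ a * cᵢ + b * dᵢ`, multiplied over the diagonal entries. If `X + Y` is singular,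
then so are `X`, `Y` and every convex combination of them.
-/

section Products

variable {ι : Type*}

theorem prod_eq_prod_iff_of_nonneg_of_le_of_pos {R : Type*} [CommMonoidWithZero R]
    [PartialOrder R] [ZeroLEOneClass R] [PosMulStrictMono R] [Nontrivial R]
    {s : Finset ι} {f g : ι → R} (hf : ∀ i ∈ s, 0 ≤ f i)
    (hfg : ∀ i ∈ s, f i ≤ g i) (hg : ∀ i ∈ s, 0 < g i) :
    ∏ i ∈ s, f i = ∏ i ∈ s, g i ↔ ∀ i ∈ s, f i = g i := by
  refine ⟨fun h => ?_, Finset.prod_congr rfl⟩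
  have hf_pos : ∀ i ∈ s, 0 < f i := fun i hi => (hf i hi).lt_of_ne' fun hfi =>
    (Finset.prod_pos hg).ne' (h ▸ Finset.prod_eq_zero hi hfi)
  by_contra! ⟨i, hi, hne⟩
  exact (Finset.prod_lt_prod hf_pos hfg ⟨i, hi, (hfg i hi).lt_of_ne hne⟩).ne h

variable {s : Finset ι} {c d : ι → ℝ} {a b : ℝ}

theorem prod_rpow_mul_prod_rpow (hc : ∀ i ∈ s, 0 ≤ c i) (hd : ∀ i ∈ s, 0 ≤ d i) :
    (∏ i ∈ s, c i) ^ a * (∏ i ∈ s, d i) ^ b = ∏ i ∈ s, c i ^ a * d i ^ b := by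
  rw [← Real.finsetProd_rpow _ _ hc, ← Real.finsetProd_rpow _ _ hd, Finset.prod_mul_distrib]

theorem prod_rpow_mul_prod_rpow_le (hc : ∀ i ∈ s, 0 ≤ c i) (hd : ∀ i ∈ s, 0 ≤ d i)
    (ha : 0 ≤ a) (hb : 0 ≤ b) (hab : a + b = 1) :
    (∏ i ∈ s, c i) ^ a * (∏ i ∈ s, d i) ^ b ≤ ∏ i ∈ s, (a * c i + b * d i) := by
  rw [prod_rpow_mul_prod_rpow hc hd]
  exact Finset.prod_le_prod
    (fun i hi => mul_nonneg (Real.rpow_nonneg (hc i hi) a) (Real.rpow_nonneg (hd i hi) b))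
    fun i hi => Real.geom_mean_le_arith_mean2_weighted ha hb (hc i hi) (hd i hi) hab

theorem prod_rpow_mul_prod_rpow_eq_iff (hc : ∀ i ∈ s, 0 ≤ c i) (hd : ∀ i ∈ s, 0 ≤ d i)
    (hcd : ∀ i ∈ s, 0 < c i + d i) (ha : 0 < a) (hb : 0 < b) (hab : a + b = 1) :
    (∏ i ∈ s, c i) ^ a * (∏ i ∈ s, d i) ^ b = ∏ i ∈ s, (a * c i + b * d i) ↔
      ∀ i ∈ s, c i = d i := by
  have mean_pos : ∀ i ∈ s, 0 < a * c i + b * d i := fun i hi => by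
    rcases (hc i hi).eq_or_lt with hci | hci
    · have hdi : 0 < d i := by simpa [← hci] using hcd i hi
      rw [← hci]
      positivity
    · have := hd i hi
      positivity
  rw [prod_rpow_mul_prod_rpow hc hd, prod_eq_prod_iff_of_nonneg_of_le_of_pos
    (fun i hi => mul_nonneg (Real.rpow_nonneg (hc i hi) a) (Real.rpow_nonneg (hd i hi) b))
    (fun i hi => Real.geom_mean_le_arith_mean2_weighted ha.le hb.le (hc i hi) (hd i hi) hab)
    mean_pos]
  exact forall₂_congr fun i hi =>
    Real.geom_mean_eq_arith_mean2_weighted_iff_of_pos ha hb (hc i hi) (hd i hi) hab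

end Products

section Congruence

variable {𝕜 n : Type*} [RCLike 𝕜] [Fintype n] [DecidableEq n]

/-- The matrix `Sᴴ D S` congruent via `S` to the diagonal matrix `D` with diagonal `d`, as a linear
function of `d`. The entries of `d` are real because every Hermitian matrix over `𝕜` is congruent to
a real diagonal one. -/
noncomputable def congrDiagonal (S : Matrix n n 𝕜) : (n → ℝ) →ₗ[ℝ] Matrix n n 𝕜 where
  toFun d := Sᴴ * diagonal (fun i => (d i : 𝕜)) * S
  map_add' c d := by
    simp [← diagonal_add, Matrix.mul_add, Matrix.add_mul]
  map_smul' a d := by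
    have : diagonal (fun i => ((a • d) i : 𝕜)) = a • diagonal (fun i => (d i : 𝕜)) := by
      ext i j
      simp [diagonal_apply, RCLike.real_smul_eq_coe_mul]
    rw [this, Matrix.mul_smul, Matrix.smul_mul, RingHom.id_apply]

theorem congrDiagonal_apply (S : Matrix n n 𝕜) (d : n → ℝ) :
    congrDiagonal S d = Sᴴ * diagonal (fun i => (d i : 𝕜)) * S :=
  rfl

theorem congrDiagonal_one (S : Matrix n n 𝕜) : congrDiagonal S 1 = Sᴴ * S := by
  simp [congrDiagonal_apply]

theorem congrDiagonal_mul (S T : Matrix n n 𝕜) (d : n → ℝ) :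
    congrDiagonal (S * T) d = Tᴴ * congrDiagonal S d * T := by
  simp only [congrDiagonal_apply, conjTranspose_mul, Matrix.mul_assoc]

theorem congrDiagonal_injective {S : Matrix n n 𝕜} (hS : IsUnit S) :
    Function.Injective (congrDiagonal S) := fun c d h => by
  have hdiag := hS.star.mul_left_cancel (hS.mul_right_cancel h)
  exact funext fun i => RCLike.ofReal_injective (congrFun (diagonal_injective hdiag) i)

theorem re_det_congrDiagonal (S : Matrix n n 𝕜) (d : n → ℝ) :
    RCLike.re (congrDiagonal S d).det = ‖S.det‖ ^ 2 * ∏ i, d i := by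
  have : (congrDiagonal S d).det = ((‖S.det‖ ^ 2 * ∏ i, d i : ℝ) : 𝕜) := by
    rw [congrDiagonal_apply, det_mul, det_mul, det_conjTranspose, det_diagonal, mul_right_comm,
      RCLike.star_def, RCLike.conj_mul]
    push_cast
    rfl
  rw [this, RCLike.ofReal_re]

open scoped ComplexOrder

theorem posSemidef_congrDiagonal_iff {S : Matrix n n 𝕜} (hS : IsUnit S) {d : n → ℝ} :
    (congrDiagonal S d).PosSemidef ↔ ∀ i, 0 ≤ d i := by
  rw [congrDiagonal_apply, ← star_eq_conjTranspose, IsUnit.posSemidef_star_left_conjugate_iff hS,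
    posSemidef_diagonal_iff]
  simp

open scoped MatrixOrder Matrix.Norms.L2Operator in
theorem exists_isUnit_eq_conjTranspose_mul_self_of_posDef {A : Matrix n n 𝕜} (hA : A.PosDef) :
    ∃ B : Matrix n n 𝕜, IsUnit B ∧ A = Bᴴ * B :=
  CStarAlgebra.isStrictlyPositive_iff_eq_star_mul_self.mp hA.isStrictlyPositive

theorem exists_unitary_congrDiagonal_of_isHermitian {A : Matrix n n 𝕜} (hA : A.IsHermitian) :
    ∃ U ∈ unitaryGroup n 𝕜, ∃ d, A = congrDiagonal U d := by
  refine ⟨star hA.eigenvectorUnitary, (star hA.eigenvectorUnitary).2, hA.eigenvalues, ?_⟩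
  simpa [congrDiagonal_apply, Unitary.conjStarAlgAut_apply, ← star_eq_conjTranspose,
    Function.comp_def] using hA.spectral_theorem

theorem exists_congrDiagonal_of_posDef_of_isHermitian {A B : Matrix n n 𝕜} (hA : A.PosDef)
    (hB : B.IsHermitian) :
    ∃ S : Matrix n n 𝕜, IsUnit S ∧ A = congrDiagonal S 1 ∧ ∃ d, B = congrDiagonal S d := by
  obtain ⟨T, hT, hA_eq⟩ := exists_isUnit_eq_conjTranspose_mul_self_of_posDef hA
  obtain ⟨U, hU, d, hd⟩ := exists_unitary_congrDiagonal_of_isHermitian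
    (isHermitian_conjTranspose_mul_mul T⁻¹ hB)
  have hT_inv : T⁻¹ * T = 1 := nonsing_inv_mul T ((isUnit_iff_isUnit_det T).mp hT)
  have hU_star : Uᴴ * U = 1 := mem_unitaryGroup_iff'.mp hU
  refine ⟨U * T, (Unitary.isUnit_coe (U := ⟨U, hU⟩)).mul hT, ?_, d, ?_⟩
  · rw [congrDiagonal_mul, congrDiagonal_one, hU_star, Matrix.mul_one, hA_eq]
  · calc B = (T⁻¹ * T)ᴴ * B * (T⁻¹ * T) := by simp [hT_inv]
      _ = Tᴴ * (T⁻¹ᴴ * B * T⁻¹) * T := by simp only [conjTranspose_mul, Matrix.mul_assoc]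
      _ = congrDiagonal (U * T) d := by rw [hd, congrDiagonal_mul]

theorem exists_congrDiagonal_of_posDef_add {X Y : Matrix n n 𝕜} (hY : Y.IsHermitian)
    (hXY : (X + Y).PosDef) :
    ∃ S : Matrix n n 𝕜, IsUnit S ∧ ∃ c d : n → ℝ,
      c + d = 1 ∧ X = congrDiagonal S c ∧ Y = congrDiagonal S d := by
  obtain ⟨S, hS, hXY_eq, d, hd⟩ := exists_congrDiagonal_of_posDef_of_isHermitian hXY hY
  refine ⟨S, hS, 1 - d, d, sub_add_cancel 1 d, ?_, hd⟩
  rw [map_sub, ← hXY_eq, ← hd, add_sub_cancel_right]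

end Congruence

section DetConvexCombination

open scoped ComplexOrder

variable {𝕜 n : Type*} [RCLike 𝕜] [Fintype n] [DecidableEq n] {X Y : Matrix n n 𝕜} {a b : ℝ}

theorem re_det_rpow_mul_re_det_rpow_congrDiagonal (S : Matrix n n 𝕜) {c d : n → ℝ}
    (hc : ∀ i, 0 ≤ c i) (hd : ∀ i, 0 ≤ d i) (hab : a + b = 1) :
    RCLike.re (congrDiagonal S c).det ^ a * RCLike.re (congrDiagonal S d).det ^ b =
      ‖S.det‖ ^ 2 * ((∏ i, c i) ^ a * (∏ i, d i) ^ b) := by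
  have hS : 0 ≤ ‖S.det‖ ^ 2 := by positivity
  have hS_rpow : (‖S.det‖ ^ 2) ^ a * (‖S.det‖ ^ 2) ^ b = ‖S.det‖ ^ 2 := by
    rw [← Real.rpow_add' hS (by simp [hab]), hab, Real.rpow_one]
  rw [re_det_congrDiagonal, re_det_congrDiagonal,
    Real.mul_rpow hS (Finset.prod_nonneg fun i _ => hc i),
    Real.mul_rpow hS (Finset.prod_nonneg fun i _ => hd i), mul_mul_mul_comm, hS_rpow]

theorem det_rpow_mul_det_rpow_le_and_eq_iff_of_posDef_add (hX : X.PosSemidef) (hY : Y.PosSemidef)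
    (hXY : (X + Y).PosDef) (ha : 0 < a) (hb : 0 < b) (hab : a + b = 1) :
    RCLike.re X.det ^ a * RCLike.re Y.det ^ b ≤ RCLike.re (a • X + b • Y).det ∧
      (RCLike.re (a • X + b • Y).det = RCLike.re X.det ^ a * RCLike.re Y.det ^ b ↔ X = Y) := by
  obtain ⟨S, hS, c, d, hcd, rfl, rfl⟩ := exists_congrDiagonal_of_posDef_add hY.isHermitian hXY
  have hc := (posSemidef_congrDiagonal_iff hS).mp hX
  have hd := (posSemidef_congrDiagonal_iff hS).mp hY
  have hS_pos : 0 < ‖S.det‖ ^ 2 := by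
    have : S.det ≠ 0 := ((isUnit_iff_isUnit_det S).mp hS).ne_zero
    positivity
  have hcd_pos : ∀ i, 0 < c i + d i := fun i => zero_lt_one.trans_eq (congrFun hcd i).symm
  have det_combination : RCLike.re (a • congrDiagonal S c + b • congrDiagonal S d).det =
      ‖S.det‖ ^ 2 * ∏ i, (a * c i + b * d i) := by
    rw [← map_smul, ← map_smul, ← map_add, re_det_congrDiagonal]
    rfl
  rw [det_combination, re_det_rpow_mul_re_det_rpow_congrDiagonal S hc hd hab]
  constructor
  · gcongr
    exact prod_rpow_mul_prod_rpow_le (fun i _ => hc i) (fun i _ => hd i) ha.le hb.le hab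
  · rw [mul_right_inj' hS_pos.ne', eq_comm, prod_rpow_mul_prod_rpow_eq_iff (fun i _ => hc i)
      (fun i _ => hd i) (fun i _ => hcd_pos i) ha hb hab, (congrDiagonal_injective hS).eq_iff,
      funext_iff]
    simp only [Finset.mem_univ, forall_const]

theorem det_eq_zero_of_det_add_eq_zero (hX : X.PosSemidef) (hY : Y.PosSemidef)
    (h : (X + Y).det = 0) : X.det = 0 := by
  contrapose! h
  exact ((hX.posDef_iff_det_ne_zero.mpr h).add_posSemidef hY).det_pos.ne'

theorem det_half_add_ge_sqrt_det_mul_det_general (hX : X.PosSemidef) (hY : Y.PosSemidef)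
    (ha : 0 < a) (hb : 0 < b) (hab : a + b = 1) :
    RCLike.re X.det ^ a * RCLike.re Y.det ^ b ≤ RCLike.re (a • X + b • Y).det ∧
      (RCLike.re (a • X + b • Y).det = RCLike.re X.det ^ a * RCLike.re Y.det ^ b ↔
        X = Y ∨ (X + Y).det = 0) := by
  by_cases h : (X + Y).det = 0
  · have hX_det : X.det = 0 := det_eq_zero_of_det_add_eq_zero hX hY h
    have h_det : (a • X + b • Y).det = 0 := by
      refine det_eq_zero_of_det_add_eq_zero ((hX.smul ha.le).add (hY.smul hb.le))
        ((hX.smul hb.le).add (hY.smul ha.le)) ?_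
      rwa [add_add_add_comm, ← add_smul, ← add_smul, add_comm b, hab, one_smul, one_smul]
    simp [h, hX_det, h_det, Real.zero_rpow ha.ne']
  · have hXY : (X + Y).PosDef := (hX.add hY).posDef_iff_det_ne_zero.mpr h
    simpa only [h, or_false] using
      det_rpow_mul_det_rpow_le_and_eq_iff_of_posDef_add hX hY hXY ha hb hab

end DetConvexCombination

/-- For symmetric positive definite `X` and `Y`,
`det((X+Y)/2) ≥ √(det X · det Y)`, with equality if and only if `X = Y`. -/
theorem det_half_add_ge_sqrt_det_mul_det {n : ℕ}
    (X Y : Matrix (Fin n) (Fin n) ℝ) (hX : X.PosDef) (hY : Y.PosDef) :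
    Real.sqrt (X.det * Y.det) ≤ ((2 : ℝ)⁻¹ • (X + Y)).det ∧
      (((2 : ℝ)⁻¹ • (X + Y)).det = Real.sqrt (X.det * Y.det) ↔ X = Y) := by
  simpa [Real.sqrt_eq_rpow, Real.mul_rpow hX.det_pos.le hY.det_pos.le, (hX.add hY).det_pos.ne']
    using det_half_add_ge_sqrt_det_mul_det_general hX.posSemidef hY.posSemidef
    (a := 2⁻¹) (b := 2⁻¹) (by norm_num) (by norm_num) (by norm_num)
end

section
/- The Stein divergence is non-negative and definite: for all n×n real symmetric positive definite matrices X and Y, δ_S²(X,Y) ≥ 0, and δ_S²(X,Y) = 0 if and only if X = Y. -/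
open Matrix

/-!
A congruence `X ↦ Wᴴ X W` multiplies both `det ((X + Y) / 2)` and `√(det (X Y))` by `(det W)²`, so
the Stein divergence is invariant under it. Since a pair of positive definite matrices is congruent
to a pair of diagonal ones, it is enough to treat diagonal matrices, for which the divergence is
`∑ i, (log ((a i + b i) / 2) - (log (a i) + log (b i)) / 2)`. Each term is the midpoint concavity
gap of the strictly concave function `log`.
-/

section Log

open Real

variable {x y : ℝ}

theorem half_log_add_log_lt (hx : 0 < x) (hy : 0 < y) (hxy : x ≠ y) :
    (log x + log y) / 2 < log ((x + y) / 2) := by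
  have h := strictConcaveOn_log_Ioi.2 hx hy hxy one_half_pos one_half_pos (add_halves 1)
  simp only [smul_eq_mul, ← mul_add] at h
  rwa [one_div_mul_eq_div, one_div_mul_eq_div] at h

theorem half_log_add_log_le (hx : 0 < x) (hy : 0 < y) :
    (log x + log y) / 2 ≤ log ((x + y) / 2) := by
  rcases eq_or_ne x y with rfl | hxy
  · simp only [add_self_div_two, le_refl]
  · exact (half_log_add_log_lt hx hy hxy).le

theorem half_log_add_log_eq_iff (hx : 0 < x) (hy : 0 < y) :
    (log x + log y) / 2 = log ((x + y) / 2) ↔ x = y := by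
  refine ⟨fun h ↦ ?_, ?_⟩
  · by_contra hxy
    exact (half_log_add_log_lt hx hy hxy).ne h
  · rintro rfl
    simp only [add_self_div_two]

end Log

section SimultaneousDiagonalization

open scoped ComplexOrder

variable {𝕜 m : Type*} [RCLike 𝕜] [Fintype m] [DecidableEq m] {X Y : Matrix m m 𝕜}

open scoped MatrixOrder in
theorem exists_isUnit_conjTranspose_mul_self_eq (hX : X.PosDef) :
    ∃ B : Matrix m m 𝕜, IsUnit B ∧ Bᴴ * B = X := by
  obtain ⟨B, hB, hXB⟩ :=
    CStarAlgebra.isStrictlyPositive_iff_eq_star_mul_self.mp hX.isStrictlyPositive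
  exact ⟨B, hB, hXB.symm⟩

theorem exists_congruence_one_diagonal (hX : X.PosDef) (hY : Y.IsHermitian) :
    ∃ (W : Matrix m m 𝕜) (d : m → ℝ), IsUnit W ∧
      Wᴴ * W = X ∧ Wᴴ * diagonal (fun i ↦ (d i : 𝕜)) * W = Y := by
  obtain ⟨B, hB, rfl⟩ := exists_isUnit_conjTranspose_mul_self_eq hX
  have hinv : B⁻¹ * B = 1 := nonsing_inv_mul B ((isUnit_iff_isUnit_det B).mp hB)
  have hinv' : Bᴴ * B⁻¹ᴴ = 1 := by rw [← conjTranspose_mul, hinv, conjTranspose_one]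
  have hZ : (B⁻¹ᴴ * Y * B⁻¹).IsHermitian := isHermitian_conjTranspose_mul_mul B⁻¹ hY
  let U := hZ.eigenvectorUnitary
  let D : Matrix m m 𝕜 := diagonal fun i ↦ (hZ.eigenvalues i : 𝕜)
  have hspec : B⁻¹ᴴ * Y * B⁻¹ = (U : Matrix m m 𝕜) * D * (U : Matrix m m 𝕜)ᴴ :=
    hZ.spectral_theorem
  have hU : (U : Matrix m m 𝕜) * (U : Matrix m m 𝕜)ᴴ = 1 := Unitary.coe_mul_star_self U
  refine ⟨(U : Matrix m m 𝕜)ᴴ * B, hZ.eigenvalues, ?_, ?_, ?_⟩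
  · exact (IsUnit.of_mul_eq_one_right _ hU).mul hB
  · rw [conjTranspose_mul, conjTranspose_conjTranspose, Matrix.mul_assoc,
      ← Matrix.mul_assoc (U : Matrix m m 𝕜), hU, Matrix.one_mul]
  · calc ((U : Matrix m m 𝕜)ᴴ * B)ᴴ * D * ((U : Matrix m m 𝕜)ᴴ * B)
        = Bᴴ * (U * D * (U : Matrix m m 𝕜)ᴴ) * B := by
          simp only [conjTranspose_mul, conjTranspose_conjTranspose, Matrix.mul_assoc]
      _ = (Bᴴ * B⁻¹ᴴ) * Y * (B⁻¹ * B) := by simp only [← hspec, Matrix.mul_assoc]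
      _ = Y := by rw [hinv, hinv', Matrix.one_mul, Matrix.mul_one]

theorem exists_congruence_diagonal_pos (hX : X.PosDef) (hY : Y.PosDef) :
    ∃ (W : Matrix m m 𝕜) (a b : m → ℝ), IsUnit W ∧ (∀ i, 0 < a i) ∧ (∀ i, 0 < b i) ∧
      Wᴴ * diagonal (fun i ↦ (a i : 𝕜)) * W = X ∧ Wᴴ * diagonal (fun i ↦ (b i : 𝕜)) * W = Y := by
  obtain ⟨W, d, hW, rfl, rfl⟩ := exists_congruence_one_diagonal hX hY.isHermitian
  have hD : (diagonal fun i ↦ (d i : 𝕜)).PosDef := hW.posDef_star_left_conjugate_iff.mp hY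
  refine ⟨W, 1, d, hW, fun _ ↦ one_pos, fun i ↦ ?_, ?_, rfl⟩
  · exact RCLike.ofReal_pos.mp (posDef_diagonal_iff.mp hD i)
  · simp only [Pi.one_apply, RCLike.ofReal_one, diagonal_one, Matrix.mul_one]

end SimultaneousDiagonalization

section SteinDiv

variable {n : ℕ}

theorem steinDiv_mul_mul_s6 {V W X Y : Matrix (Fin n) (Fin n) ℝ} (hV : IsUnit V) (hW : IsUnit W)
    (hX : IsUnit X) (hY : IsUnit Y) (hXY : IsUnit (X + Y)) :
    steinDiv (V * X * W) (V * Y * W) = steinDiv X Y := by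
  simp only [isUnit_iff_isUnit_det, isUnit_iff_ne_zero] at hV hW hX hY hXY
  have hVW : V.det * W.det ≠ 0 := mul_ne_zero hV hW
  have hmid : ((2 : ℝ)⁻¹ • (X + Y)).det ≠ 0 := by
    rw [det_smul]
    exact mul_ne_zero (by positivity) hXY
  have hprod : (X * Y).det ≠ 0 := by
    rw [det_mul]
    exact mul_ne_zero hX hY
  have hmid_congr : (2 : ℝ)⁻¹ • (V * X * W + V * Y * W) = V * ((2 : ℝ)⁻¹ • (X + Y)) * W := by
    rw [← Matrix.add_mul, ← Matrix.mul_add, Matrix.mul_smul, Matrix.smul_mul]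
  have hdet_mid : (V * ((2 : ℝ)⁻¹ • (X + Y)) * W).det =
      V.det * W.det * ((2 : ℝ)⁻¹ • (X + Y)).det := by
    rw [det_mul, det_mul]
    ring
  have hdet_prod : (V * X * W * (V * Y * W)).det = (V.det * W.det) ^ 2 * (X * Y).det := by
    simp only [det_mul]
    ring
  rw [steinDiv, steinDiv, hmid_congr, hdet_mid, hdet_prod, Real.log_mul hVW hmid,
    Real.log_mul (pow_ne_zero 2 hVW) hprod, Real.log_pow]
  push_cast
  ring

variable {a b : Fin n → ℝ}

theorem steinDiv_diagonal (ha : ∀ i, 0 < a i) (hb : ∀ i, 0 < b i) :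
    steinDiv (diagonal a) (diagonal b) =
      ∑ i, (Real.log ((a i + b i) / 2) - (Real.log (a i) + Real.log (b i)) / 2) := by
  have hmid : (2 : ℝ)⁻¹ • (diagonal a + diagonal b) = diagonal fun i ↦ (a i + b i) / 2 := by
    rw [diagonal_add, ← diagonal_smul]
    congr with i
    exact inv_mul_eq_div _ _
  have hlog (i) : Real.log (a i * b i) = Real.log (a i) + Real.log (b i) :=
    Real.log_mul (ha i).ne' (hb i).ne'
  rw [steinDiv, hmid, diagonal_mul_diagonal, det_diagonal, det_diagonal,
    Real.log_prod fun i _ ↦ (half_pos (add_pos (ha i) (hb i))).ne',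
    Real.log_prod fun i _ ↦ (mul_pos (ha i) (hb i)).ne', Finset.mul_sum, ← Finset.sum_sub_distrib]
  simp only [hlog, one_div_mul_eq_div]

theorem steinDiv_diagonal_nonneg (ha : ∀ i, 0 < a i) (hb : ∀ i, 0 < b i) :
    0 ≤ steinDiv (diagonal a) (diagonal b) := by
  rw [steinDiv_diagonal ha hb]
  exact Finset.sum_nonneg fun i _ ↦ sub_nonneg.mpr (half_log_add_log_le (ha i) (hb i))

theorem steinDiv_diagonal_eq_zero_iff (ha : ∀ i, 0 < a i) (hb : ∀ i, 0 < b i) :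
    steinDiv (diagonal a) (diagonal b) = 0 ↔ a = b := by
  rw [steinDiv_diagonal ha hb, Finset.sum_eq_zero_iff_of_nonneg fun i _ ↦
    sub_nonneg.mpr (half_log_add_log_le (ha i) (hb i)), funext_iff]
  simp only [Finset.mem_univ, true_imp_iff]
  exact forall_congr' fun i ↦
    sub_eq_zero.trans (eq_comm.trans (half_log_add_log_eq_iff (ha i) (hb i)))

end SteinDiv

/-- The Stein divergence is non-negative and definite: for symmetric positive definite
`X` and `Y`, `δ_S²(X,Y) ≥ 0`, and `δ_S²(X,Y) = 0` if and only if `X = Y`. -/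
theorem steinDiv_nonneg_and_definite {n : ℕ}
    (X Y : Matrix (Fin n) (Fin n) ℝ) (hX : X.PosDef) (hY : Y.PosDef) :
    0 ≤ steinDiv X Y ∧ (steinDiv X Y = 0 ↔ X = Y) := by
  -- The coercion `RCLike.ofReal : ℝ → ℝ` left out here is definitionally the identity.
  obtain ⟨W, a, b, hW, ha, hb, rfl, rfl⟩ :
      ∃ (W : Matrix (Fin n) (Fin n) ℝ) (a b : Fin n → ℝ), IsUnit W ∧
        (∀ i, 0 < a i) ∧ (∀ i, 0 < b i) ∧ Wᴴ * diagonal a * W = X ∧ Wᴴ * diagonal b * W = Y :=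
    exists_congruence_diagonal_pos hX hY
  have hA : (diagonal a).PosDef := posDef_diagonal_iff.mpr ha
  have hB : (diagonal b).PosDef := posDef_diagonal_iff.mpr hb
  have hdiv : steinDiv (Wᴴ * diagonal a * W) (Wᴴ * diagonal b * W) =
      steinDiv (diagonal a) (diagonal b) :=
    steinDiv_mul_mul_s6 hW.star hW hA.isUnit hB.isUnit (hA.add hB).isUnit
  have hcancel : Wᴴ * diagonal a * W = Wᴴ * diagonal b * W ↔ a = b :=
    hW.mul_left_inj.trans (hW.star.mul_right_inj.trans diagonal_injective.eq_iff)
  rw [hdiv, hcancel]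
  exact ⟨steinDiv_diagonal_nonneg ha hb, steinDiv_diagonal_eq_zero_iff ha hb⟩
end

section
/- The function X ↦ −log det(X) is strictly convex on the convex set of n×n real symmetric positive definite matrices; that is, for distinct symmetric positive definite X and Y and t ∈ (0,1), −log det(tX + (1−t)Y) < −t log det(X) − (1−t) log det(Y). -/
open Matrix

/-! Factor `Y = S* S` and diagonalize `S⁻* X S⁻¹` by a unitary: this yields an invertible `P` and a
real vector `d` with `X = P* diag(d) P` and `Y = P* P`. Along the linear map `d ↦ P* diag(d) P` the
function `-log det` is a constant plus `∑ i, -log (d i)`, which inherits strict convexity on the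
positive orthant from that of `-log`. -/

theorem strictConvexOn_sum_pi {𝕜 ι β : Type*} {E : ι → Type*} [Fintype ι]
    [Semiring 𝕜] [PartialOrder 𝕜] [∀ i, AddCommMonoid (E i)] [∀ i, Module 𝕜 (E i)]
    [AddCommMonoid β] [PartialOrder β] [IsOrderedCancelAddMonoid β] [Module 𝕜 β]
    {s : ∀ i, Set (E i)} {f : ∀ i, E i → β} (hf : ∀ i, StrictConvexOn 𝕜 (s i) (f i)) :
    StrictConvexOn 𝕜 (Set.univ.pi s) fun x ↦ ∑ i, f i (x i) := by
  refine ⟨convex_pi fun i _ ↦ (hf i).1, fun x hx y hy hxy a b ha hb hab ↦ ?_⟩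
  obtain ⟨j, hj⟩ := Function.ne_iff.1 hxy
  simp only [Finset.smul_sum, ← Finset.sum_add_distrib]
  refine Finset.sum_lt_sum (fun i _ ↦ ?_) ⟨j, Finset.mem_univ j, ?_⟩
  · obtain hi | hi := eq_or_ne (x i) (y i)
    · simp only [Pi.add_apply, Pi.smul_apply, hi, ← add_smul, hab, one_smul, le_refl]
    · exact ((hf i).2 (hx i trivial) (hy i trivial) hi ha hb hab).le
  · exact (hf j).2 (hx j trivial) (hy j trivial) hj ha hb hab

section

open scoped ComplexOrder

variable {𝕜 n : Type*} [RCLike 𝕜]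

theorem convex_setOf_posDef : Convex ℝ {X : Matrix n n 𝕜 | X.PosDef} :=
  convex_iff_forall_pos.2 fun _ hX _ hY _ _ ha hb _ ↦ (hX.smul ha).add (hY.smul hb)

variable [Fintype n] [DecidableEq n]

/-- The congruence transform `P* diag(d) P` of a real diagonal matrix, as a real-linear function of
its diagonal `d`; a pair of Hermitian forms is diagonalized simultaneously by writing both forms
in this way with the same `P`. -/
noncomputable def diagonalCongr (P : Matrix n n 𝕜) : (n → ℝ) →ₗ[ℝ] Matrix n n 𝕜 :=
  LinearMap.mulLeftRight ℝ (star P, P) ∘ₗ diagonalLinearMap n ℝ 𝕜 ∘ₗ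
    (Algebra.linearMap ℝ 𝕜).compLeft n

theorem diagonalCongr_apply (P : Matrix n n 𝕜) (d : n → ℝ) :
    diagonalCongr P d = star P * diagonal (RCLike.ofReal ∘ d) * P :=
  rfl

theorem diagonalCongr_one (P : Matrix n n 𝕜) : diagonalCongr P 1 = star P * P := by
  have hone : (RCLike.ofReal ∘ (1 : n → ℝ) : n → 𝕜) = 1 := by ext; simp
  rw [diagonalCongr_apply, hone, diagonal_one', mul_one]

theorem posDef_diagonalCongr_iff {P : Matrix n n 𝕜} (hP : IsUnit P) {d : n → ℝ} :
    (diagonalCongr P d).PosDef ↔ ∀ i, 0 < d i := by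
  rw [diagonalCongr_apply, hP.posDef_star_left_conjugate_iff, posDef_diagonal_iff]
  simp only [Function.comp_apply, RCLike.ofReal_pos]

theorem diagonalCongr_mul (P Q : Matrix n n 𝕜) (d : n → ℝ) :
    diagonalCongr (P * Q) d = star Q * diagonalCongr P d * Q := by
  simp only [diagonalCongr_apply, star_mul, mul_assoc]

theorem diagonalCongr_star_eigenvectorUnitary {X : Matrix n n 𝕜} (hX : X.IsHermitian) :
    diagonalCongr (star (hX.eigenvectorUnitary : Matrix n n 𝕜)) hX.eigenvalues = X := by
  conv_rhs => rw [hX.spectral_theorem, Unitary.conjStarAlgAut_apply]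
  rw [diagonalCongr_apply, star_star]

open scoped MatrixOrder in
theorem exists_diagonalCongr_eq {X Y : Matrix n n 𝕜} (hX : X.IsHermitian) (hY : Y.PosDef) :
    ∃ P : Matrix n n 𝕜, IsUnit P ∧ ∃ d, diagonalCongr P d = X ∧ diagonalCongr P 1 = Y := by
  obtain ⟨_, ⟨S, rfl⟩, rfl⟩ :=
    CStarAlgebra.isStrictlyPositive_iff_eq_star_mul_self.1 hY.isStrictlyPositive
  let Z : Matrix n n 𝕜 := star (↑S⁻¹ : Matrix n n 𝕜) * X * (↑S⁻¹ : Matrix n n 𝕜)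
  have hZ : Z.IsHermitian := isHermitian_conjTranspose_mul_mul _ hX
  have hSZ : star (S : Matrix n n 𝕜) * Z * S = X := by
    have hS : star (S : Matrix n n 𝕜) * star (↑S⁻¹ : Matrix n n 𝕜) = 1 := by
      rw [← star_mul, Units.inv_mul, star_one]
    simp only [Z, ← mul_assoc, hS, one_mul, Units.inv_mul_cancel_right]
  refine ⟨star (hZ.eigenvectorUnitary : Matrix n n 𝕜) * S,
    Unitary.isUnit_coe.star.mul S.isUnit, hZ.eigenvalues, ?_, ?_⟩
  · rw [diagonalCongr_mul, diagonalCongr_star_eigenvectorUnitary, hSZ]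
  · rw [diagonalCongr_mul, diagonalCongr_one, star_star,
      Unitary.mul_star_self_of_mem hZ.eigenvectorUnitary.2, mul_one]

theorem re_det_diagonalCongr (P : Matrix n n 𝕜) (d : n → ℝ) :
    RCLike.re (diagonalCongr P d).det = RCLike.re (star P * P).det * ∏ i, d i := by
  have hdet : (diagonalCongr P d).det = (star P * P).det * ((∏ i, d i : ℝ) : 𝕜) := by
    simp only [diagonalCongr_apply, det_mul, det_diagonal, Function.comp_apply, RCLike.ofReal_prod]
    ring
  rw [hdet, RCLike.re_mul_ofReal]

theorem log_re_det_diagonalCongr {P : Matrix n n 𝕜} (hP : IsUnit P) {d : n → ℝ}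
    (hd : ∀ i, 0 < d i) :
    Real.log (RCLike.re (diagonalCongr P d).det) =
      Real.log (RCLike.re (star P * P).det) + ∑ i, Real.log (d i) := by
  have hPP : (star P * P).PosDef := .conjTranspose_mul_self P (mulVec_injective_of_isUnit hP)
  have hdet : 0 < RCLike.re (star P * P).det := (RCLike.pos_iff.1 hPP.det_pos).1
  rw [re_det_diagonalCongr, Real.log_mul hdet.ne' (Finset.prod_pos fun i _ ↦ hd i).ne',
    Real.log_prod fun i _ ↦ (hd i).ne']

theorem strictConvexOn_neg_log_re_det_diagonalCongr {P : Matrix n n 𝕜} (hP : IsUnit P) :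
    StrictConvexOn ℝ (Set.univ.pi fun _ ↦ Set.Ioi 0)
      fun d : n → ℝ ↦ -Real.log (RCLike.re (diagonalCongr P d).det) := by
  have hsum : StrictConvexOn ℝ (Set.univ.pi fun _ : n ↦ Set.Ioi (0 : ℝ))
      fun d ↦ ∑ i, -Real.log (d i) :=
    strictConvexOn_sum_pi fun _ ↦ strictConcaveOn_log_Ioi.neg
  refine (hsum.add_const (-Real.log (RCLike.re (star P * P).det))).congr fun d hd ↦ ?_
  rw [log_re_det_diagonalCongr hP fun i ↦ hd i trivial, neg_add_rev, Pi.add_apply,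
    Finset.sum_neg_distrib]

theorem neg_log_det_strictConvexOn_general :
    StrictConvexOn ℝ {X : Matrix n n 𝕜 | X.PosDef} fun X ↦ -Real.log (RCLike.re X.det) := by
  refine ⟨convex_setOf_posDef, fun X hX Y hY hXY a b ha hb hab ↦ ?_⟩
  obtain ⟨P, hP, d, rfl, rfl⟩ := exists_diagonalCongr_eq hX.isHermitian hY
  have hd : d ∈ Set.univ.pi fun _ ↦ Set.Ioi 0 := fun i _ ↦ (posDef_diagonalCongr_iff hP).1 hX i
  have hone : (1 : n → ℝ) ∈ Set.univ.pi fun _ ↦ Set.Ioi 0 := fun _ _ ↦ Set.mem_Ioi.2 one_pos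
  have hne : d ≠ 1 := ne_of_apply_ne _ hXY
  simpa only [map_add, map_smul] using
    (strictConvexOn_neg_log_re_det_diagonalCongr hP).2 hd hone hne ha hb hab

end

/-- The function `X ↦ −log det X` is strictly convex on the set of real symmetric
positive definite matrices: for distinct positive definite `X`, `Y` and `t ∈ (0,1)`,
`−log det(tX + (1−t)Y) < −t log det X − (1−t) log det Y`. -/
theorem neg_log_det_strictConvexOn {n : ℕ}
    (X Y : Matrix (Fin n) (Fin n) ℝ) (hX : X.PosDef) (hY : Y.PosDef) (hXY : X ≠ Y)
    (t : ℝ) (ht0 : 0 < t) (ht1 : t < 1) :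
    -Real.log ((t • X + (1 - t) • Y).det) <
      -t * Real.log X.det - (1 - t) * Real.log Y.det := by
  simpa [sub_eq_add_neg] using neg_log_det_strictConvexOn_general.2 hX hY hXY ht0
    (sub_pos.2 ht1) (add_sub_cancel t 1)
end

section
/- Uniqueness of the positive definite solution of the Riccati equation: let A and B be n×n real symmetric positive definite matrices. If X₁ and X₂ are symmetric positive definite matrices with X₁AX₁ = B and X₂AX₂ = B, then X₁ = X₂. -/
open Matrix

/-!
Multiplying `x * a * x = b` on both sides by `√a` gives `(√a * x * √a) ^ 2 = √a * b * √a`. When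
`x` is nonnegative, so is `√a * x * √a`, which is therefore the square root of `√a * b * √a`.
When moreover `a` is strictly positive, `√a` is invertible and `x` can be recovered.
-/

section NonUnital

variable {R : Type*} [PartialOrder R] [NonUnitalRing R] [TopologicalSpace R] [StarRing R]
  [Module ℝ R] [SMulCommClass ℝ R R] [IsScalarTower ℝ R R] [StarOrderedRing R]
  [NonUnitalContinuousFunctionalCalculus ℝ R IsSelfAdjoint] [NonnegSpectrumClass ℝ R]
  [IsSemitopologicalRing R] [T2Space R]

theorem sqrt_conjugate_mul_self {a : R} (ha : 0 ≤ a) (x : R) :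
    (CFC.sqrt a * x * CFC.sqrt a) * (CFC.sqrt a * x * CFC.sqrt a) =
      CFC.sqrt a * (x * a * x) * CFC.sqrt a :=
  calc
    _ = CFC.sqrt a * (x * (CFC.sqrt a * CFC.sqrt a) * x) * CFC.sqrt a := by
      simp only [mul_assoc]
    _ = CFC.sqrt a * (x * a * x) * CFC.sqrt a := by
      rw [CFC.sqrt_mul_sqrt_self a ha]

theorem sqrt_conjugate_eq_sqrt_of_riccati {a b x : R} (ha : 0 ≤ a) (hx : 0 ≤ x)
    (h : x * a * x = b) :
    CFC.sqrt a * x * CFC.sqrt a = CFC.sqrt (CFC.sqrt a * b * CFC.sqrt a) := by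
  have hsq : (CFC.sqrt a * x * CFC.sqrt a) * (CFC.sqrt a * x * CFC.sqrt a) =
      CFC.sqrt a * b * CFC.sqrt a := by
    rw [sqrt_conjugate_mul_self ha, h]
  exact (CFC.sqrt_unique hsq (conjugate_nonneg_of_nonneg hx (CFC.sqrt_nonneg a))).symm

end NonUnital

theorem riccati_solution_unique_general {R : Type*} [PartialOrder R] [Ring R] [StarRing R]
    [TopologicalSpace R] [StarOrderedRing R] [Algebra ℝ R]
    [ContinuousFunctionalCalculus ℝ R IsSelfAdjoint] [NonnegSpectrumClass ℝ R]
    [IsSemitopologicalRing R] [T2Space R] {a b x₁ x₂ : R} (ha : IsStrictlyPositive a)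
    (hx₁ : 0 ≤ x₁) (hx₂ : 0 ≤ x₂) (h₁ : x₁ * a * x₁ = b) (h₂ : x₂ * a * x₂ = b) :
    x₁ = x₂ := by
  have hsqrt : IsUnit (CFC.sqrt a) := ha.isUnit_cfcSqrt
  have hconj : CFC.sqrt a * x₁ * CFC.sqrt a = CFC.sqrt a * x₂ * CFC.sqrt a :=
    (sqrt_conjugate_eq_sqrt_of_riccati ha.nonneg hx₁ h₁).trans
      (sqrt_conjugate_eq_sqrt_of_riccati ha.nonneg hx₂ h₂).symm
  exact hsqrt.mul_left_cancel (hsqrt.mul_right_cancel hconj)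

/-- Uniqueness of the positive definite solution of the Riccati equation: if `A` and `B`
are symmetric positive definite and `X₁`, `X₂` are symmetric positive definite matrices
with `X₁ A X₁ = B` and `X₂ A X₂ = B`, then `X₁ = X₂`. -/
theorem riccati_solution_unique {n : ℕ}
    (A B X₁ X₂ : Matrix (Fin n) (Fin n) ℝ) (hA : A.PosDef) (hB : B.PosDef)
    (hX₁ : X₁.PosDef) (hX₂ : X₂.PosDef)
    (h₁ : X₁ * A * X₁ = B) (h₂ : X₂ * A * X₂ = B) :
    X₁ = X₂ := by
  open scoped MatrixOrder in
  exact riccati_solution_unique_general hA.isStrictlyPositive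
    hX₁.posSemidef.nonneg hX₂.posSemidef.nonneg h₁ h₂
end

section
/- Closed-form Fréchet mean under the Jeffrey divergence: let X₁,…,X_p be n×n real symmetric positive definite matrices, and set L = Σᵢ Xᵢ⁻¹ and Γ = Σᵢ Xᵢ. Then the matrix M* = L^{-1/2}(L^{1/2} Γ L^{1/2})^{1/2} L^{-1/2} is symmetric positive definite and minimizes the function M ↦ Σᵢ δ_J²(Xᵢ, M) over all n×n real symmetric positive definite matrices M; that is, Σᵢ δ_J²(Xᵢ, M*) ≤ Σᵢ δ_J²(Xᵢ, M) for every symmetric positive definite M. -/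
open Matrix Finset

/-- The Jeffrey divergence `δ_J²(X,Y) = (1/2)Tr(X⁻¹Y) + (1/2)Tr(Y⁻¹X) − n`. -/
noncomputable def jeffreyDiv {n : ℕ} (X Y : Matrix (Fin n) (Fin n) ℝ) : ℝ :=
  (1 / 2) * (X⁻¹ * Y).trace + (1 / 2) * (Y⁻¹ * X).trace - n

/-!
The objective is, up to constants, `tr (L M) + tr (M⁻¹ Γ)`, whose stationarity condition is the
Riccati equation `M L M = Γ`. A positive definite solution `N` of that equation is a global
minimizer: the excess of the value at `M` over the value at `N` is `tr (M⁻¹ (M - N) L (M - N))`, the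
trace of a product of two positive semidefinite matrices. With `S = L^{1/2}`, the Riccati equation
becomes `(S N S)² = S Γ S`, hence the closed form.
-/

section CommRing

variable {m R : Type*} [Fintype m] [DecidableEq m] [CommRing R]

theorem inv_mul_mul_inv_riccati {S T B : Matrix m m R} (hS : IsUnit S) (hT : T * T = S * B * S) :
    S⁻¹ * T * S⁻¹ * (S * S) * (S⁻¹ * T * S⁻¹) = B := by
  have hdet : IsUnit S.det := (isUnit_iff_isUnit_det S).1 hS
  calc S⁻¹ * T * S⁻¹ * (S * S) * (S⁻¹ * T * S⁻¹)
      = S⁻¹ * (T * T) * S⁻¹ := by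
        simp only [Matrix.mul_assoc, nonsing_inv_mul_cancel_left _ _ hdet,
          mul_nonsing_inv_cancel_left _ _ hdet]
    _ = B := by
        simp only [hT, Matrix.mul_assoc, nonsing_inv_mul_cancel_left _ _ hdet,
          mul_nonsing_inv _ hdet, Matrix.mul_one]

theorem trace_inv_mul_sub_mul_mul_sub {L M N : Matrix m m R} (hM : IsUnit M) :
    (M⁻¹ * ((M - N) * L * (M - N))).trace =
      (L * M).trace + (M⁻¹ * (N * L * N)).trace - 2 * (L * N).trace := by
  have hdet : IsUnit M.det := (isUnit_iff_isUnit_det M).1 hM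
  have expand : M⁻¹ * ((M - N) * L * (M - N)) =
      L * M - L * N - M⁻¹ * (N * L) * M + M⁻¹ * (N * L * N) := by
    simp only [Matrix.sub_mul, Matrix.mul_sub, Matrix.mul_assoc,
      nonsing_inv_mul_cancel_left _ _ hdet]
    abel
  have cross : (M⁻¹ * (N * L) * M).trace = (L * N).trace := by
    rw [trace_mul_comm, mul_nonsing_inv_cancel_left _ _ hdet, trace_mul_comm]
  rw [expand, trace_add, trace_sub, trace_sub, cross]
  ring

end CommRing

section RCLike

open scoped ComplexOrder MatrixOrder

variable {m 𝕜 : Type*} [Fintype m] [RCLike 𝕜]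

theorem trace_mul_nonneg_of_posSemidef {A B : Matrix m m 𝕜}
    (hA : A.PosSemidef) (hB : B.PosSemidef) : 0 ≤ (A * B).trace := by
  classical
  obtain ⟨C, rfl⟩ := CStarAlgebra.nonneg_iff_eq_star_mul_self.mp hB.nonneg
  rw [← Matrix.mul_assoc, trace_mul_comm, ← Matrix.mul_assoc]
  exact (hA.mul_mul_conjTranspose_same C).trace_nonneg

theorem posDef_of_posDef_mul_self {S : Matrix m m 𝕜} (hS : S.PosSemidef)
    (hSS : (S * S).PosDef) : S.PosDef := by
  classical
  exact hS.posDef_iff_isUnit.2 (isUnit_mul_self_iff.1 hSS.isUnit)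

variable [DecidableEq m]

theorem posDef_mul_mul_self {S A : Matrix m m 𝕜} (hS : S.IsHermitian) (hSu : IsUnit S)
    (hA : A.PosDef) : (S * A * S).PosDef := by
  simpa only [star_eq_conjTranspose, hS.eq] using hSu.posDef_star_left_conjugate_iff.2 hA

theorem trace_mul_add_trace_inv_mul_le_of_riccati {L M N B : Matrix m m 𝕜}
    (hL : L.PosSemidef) (hN : N.PosDef) (hNB : N * L * N = B) (hM : M.PosDef) :
    (L * N).trace + (N⁻¹ * B).trace ≤ (L * M).trace + (M⁻¹ * B).trace := by
  subst hNB
  have attained : (L * N).trace + (N⁻¹ * (N * L * N)).trace = 2 * (L * N).trace := by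
    rw [Matrix.mul_assoc N, nonsing_inv_mul_cancel_left _ _ ((isUnit_iff_isUnit_det N).1 hN.isUnit),
      two_mul]
  have hMN : ((M - N) * L * (M - N)).PosSemidef := by
    simpa only [(hM.isHermitian.sub hN.isHermitian).eq] using
      hL.mul_mul_conjTranspose_same (M - N)
  have excess_nonneg := trace_mul_nonneg_of_posSemidef hM.inv.posSemidef hMN
  rw [trace_inv_mul_sub_mul_mul_sub hM.isUnit] at excess_nonneg
  exact attained.trans_le (sub_nonneg.1 excess_nonneg)

end RCLike

theorem sum_jeffreyDiv {n : ℕ} {ι : Type*} [Fintype ι] (X : ι → Matrix (Fin n) (Fin n) ℝ)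
    (M : Matrix (Fin n) (Fin n) ℝ) :
    ∑ i, jeffreyDiv (X i) M =
      (1 / 2) * (((∑ i, (X i)⁻¹) * M).trace + (M⁻¹ * ∑ i, X i).trace) - Fintype.card ι * n := by
  simp only [jeffreyDiv, sum_sub_distrib, sum_add_distrib, ← Finset.mul_sum, ← trace_sum,
    ← Finset.sum_mul, sum_const, card_univ, nsmul_eq_mul]
  ring

theorem jeffrey_frechet_mean_closed_form_general {n : ℕ} {ι : Type*} [Fintype ι]
    (X : ι → GL (Fin n) ℝ)
    (hL : (∑ i, (X i : Matrix (Fin n) (Fin n) ℝ)⁻¹).PosDef)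
    (hΓ : (∑ i, (X i : Matrix (Fin n) (Fin n) ℝ)).PosDef)
    {S T : Matrix (Fin n) (Fin n) ℝ}
    (hS : S.PosSemidef) (hS2 : S * S = ∑ i, (X i : Matrix (Fin n) (Fin n) ℝ)⁻¹)
    (hT : T.PosSemidef) (hT2 : T * T = S * (∑ i, (X i : Matrix (Fin n) (Fin n) ℝ)) * S) :
    (S⁻¹ * T * S⁻¹).PosDef ∧
      ∀ M : Matrix (Fin n) (Fin n) ℝ, M.PosDef →
        ∑ i, jeffreyDiv (X i) (S⁻¹ * T * S⁻¹) ≤ ∑ i, jeffreyDiv (X i) M := by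
  have hSpos : S.PosDef := posDef_of_posDef_mul_self hS (hS2 ▸ hL)
  have hTpos : T.PosDef :=
    posDef_of_posDef_mul_self hT (hT2 ▸ posDef_mul_mul_self hS.isHermitian hSpos.isUnit hΓ)
  have hN : (S⁻¹ * T * S⁻¹).PosDef :=
    posDef_mul_mul_self hSpos.inv.isHermitian hSpos.inv.isUnit hTpos
  refine ⟨hN, fun M hM => ?_⟩
  have riccati := inv_mul_mul_inv_riccati hSpos.isUnit hT2
  rw [hS2] at riccati
  rw [sum_jeffreyDiv, sum_jeffreyDiv]
  gcongr (1 / 2) * ?_ - _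
  exact trace_mul_add_trace_inv_mul_le_of_riccati hL.posSemidef hN riccati hM

/-- Closed-form Fréchet mean under the Jeffrey divergence: given symmetric positive
definite matrices `X₁,…,X_p`, set `L = Σᵢ Xᵢ⁻¹` and `Γ = Σᵢ Xᵢ`. If `SL` is the
(unique) symmetric positive semidefinite square root of `L` (i.e. `SL * SL = L`) and `T`
the symmetric positive semidefinite square root of `SL * Γ * SL`, then
`M* = L^{-1/2}(L^{1/2} Γ L^{1/2})^{1/2} L^{-1/2} = SL⁻¹ * T * SL⁻¹` is symmetric
positive definite and minimizes `M ↦ Σᵢ δ_J²(Xᵢ, M)` over all symmetric positive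
definite matrices `M`. -/
theorem jeffrey_frechet_mean_closed_form {n p : ℕ} (hp : 0 < p)
    (X : Fin p → Matrix (Fin n) (Fin n) ℝ) (hX : ∀ i, (X i).PosDef)
    (SL T : Matrix (Fin n) (Fin n) ℝ)
    (hSL : SL.PosSemidef) (hSL2 : SL * SL = ∑ i, (X i)⁻¹)
    (hT : T.PosSemidef) (hT2 : T * T = SL * (∑ i, X i) * SL) :
    (SL⁻¹ * T * SL⁻¹).PosDef ∧
      ∀ M : Matrix (Fin n) (Fin n) ℝ, M.PosDef →
        ∑ i, jeffreyDiv (X i) (SL⁻¹ * T * SL⁻¹) ≤ ∑ i, jeffreyDiv (X i) M := by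
  have hne : (univ : Finset (Fin p)).Nonempty := ⟨⟨0, hp⟩, mem_univ _⟩
  have hL := posDef_sum hne fun i _ => (hX i).inv
  have hΓ := posDef_sum hne fun i _ => hX i
  lift X to Fin p → GL (Fin n) ℝ using fun i => (hX i).isUnit
  exact jeffrey_frechet_mean_closed_form_general X hL hΓ hSL hSL2 hT hT2
end

section
/- Let X be an n×n real symmetric positive definite matrix and W an n×m real matrix such that WᵀXW is invertible. Then the map W ↦ log det(WᵀXW), viewed as a map on n×m real matrices, is Fréchet differentiable at W with derivative given by H ↦ 2 Tr((WᵀXW)⁻¹ Wᵀ X H); equivalently, the matrix of partial derivatives of log det(WᵀXW) with respect to the entries of W equals 2XW(WᵀXW)⁻¹. -/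
open Matrix

attribute [local instance] Matrix.normedAddCommGroup Matrix.normedSpace

/-- The continuous linear map `H ↦ 2 Tr((WᵀXW)⁻¹ Wᵀ X H)`. -/
noncomputable def logDetDerivative {n m : ℕ} (X : Matrix (Fin n) (Fin n) ℝ)
    (W : Matrix (Fin n) (Fin m) ℝ) :
    Matrix (Fin n) (Fin m) ℝ →L[ℝ] ℝ :=
  LinearMap.toContinuousLinearMap
    { toFun := fun H => 2 * ((Wᵀ * X * W)⁻¹ * (Wᵀ * X * H)).trace
      map_add' := fun H₁ H₂ => by simp [Matrix.mul_add]; ring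
      map_smul' := fun c H => by simp [Matrix.mul_smul]; ring }

/-!
The determinant is multilinear in the rows, so its derivative at `A` replaces one row at a time by
that of the increment `H`; expanding along the replaced rows gives `Tr(adj(A) H)`. Hence
`log |det|` has derivative `H ↦ Tr(A⁻¹ H)` at an invertible `A`. The congruence `V ↦ VᵀXV` has
derivative `H ↦ WᵀXH + HᵀXW` at `W`, and by invariance of the trace under transposition and cyclic
permutation the two terms contribute `XᵀWA⁻ᵀ` and `XWA⁻¹` to the gradient, where `A = WᵀXW`. They
agree when `X` is symmetric.
-/

section TraceMul

variable {R ι κ μ : Type*} [Fintype ι] [Fintype κ]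

theorem trace_mul_transpose_mul [NonUnitalCommSemiring R] [Fintype μ]
    (B : Matrix κ μ R) (H : Matrix ι μ R) (Y : Matrix ι κ R) :
    (B * (Hᵀ * Y)).trace = ((Y * B)ᵀ * H).trace := by
  rw [← trace_transpose, transpose_mul, transpose_mul, transpose_transpose, trace_mul_cycle,
    ← transpose_mul]

variable [CommSemiring R] [TopologicalSpace R] [IsTopologicalSemiring R]

/-- The continuous linear functional `H ↦ Tr(B H)`. A scalar function of a matrix with derivative
`traceMulCLM Gᵀ` is one whose matrix of partial derivatives is `G`. -/
def traceMulCLM (B : Matrix κ ι R) : Matrix ι κ R →L[R] R where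
  toFun H := (B * H).trace
  map_add' H₁ H₂ := by rw [Matrix.mul_add, trace_add]
  map_smul' c H := by rw [Matrix.mul_smul, trace_smul, RingHom.id_apply]
  cont := by fun_prop

@[simp]
theorem traceMulCLM_apply (B : Matrix κ ι R) (H : Matrix ι κ R) :
    traceMulCLM B H = (B * H).trace := rfl

end TraceMul

section Determinant

variable {R ι : Type*} [Fintype ι] [DecidableEq ι]

theorem sum_det_updateRow [CommRing R] (A H : Matrix ι ι R) :
    ∑ i, (A.updateRow i (H i)).det = (A.adjugate * H).trace := by
  simp_rw [← cramer_transpose_apply, cramer_eq_adjugate_mulVec, ← adjugate_transpose]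
  rw [trace_mul_comm]
  simp only [mulVec, dotProduct, trace, diag_apply, mul_apply, transpose_apply, mul_comm]

/-- The determinant as a continuous alternating map of the rows, so that its derivative is given by
multilinearity. -/
def detRowContinuousAlternating [CommRing R] [TopologicalSpace R] [IsTopologicalRing R] :
    (ι → R) [⋀^ι]→L[R] R where
  __ := detRowAlternating
  cont := continuous_id.matrix_det

theorem hasFDerivAt_det {𝕜 : Type*} [NontriviallyNormedField 𝕜] (A : Matrix ι ι 𝕜) :
    HasFDerivAt (fun B : Matrix ι ι 𝕜 => B.det) (traceMulCLM A.adjugate) A := by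
  refine (detRowContinuousAlternating.hasFDerivAt A).congr_fderiv ?_
  ext1 H
  exact (ContinuousMultilinearMap.linearDeriv_apply _ _ _).trans (sum_det_updateRow A H)

theorem hasFDerivAt_log_abs_det {A : Matrix ι ι ℝ} (hA : IsUnit A.det) :
    HasFDerivAt (fun B : Matrix ι ι ℝ => Real.log |B.det|) (traceMulCLM A⁻¹) A := by
  simp_rw [Real.log_abs]
  refine ((hasFDerivAt_det A).log hA.ne_zero).congr_fderiv ?_
  ext1 H
  change A.det⁻¹ * (A.adjugate * H).trace = (A⁻¹ * H).trace
  rw [inv_def, Ring.inverse_eq_inv', Matrix.smul_mul, trace_smul, smul_eq_mul]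

end Determinant

section Congruence

variable {R ι κ : Type*} [Fintype ι]

theorem isSymm_transpose_mul_mul [NonUnitalCommSemiring R] {X : Matrix ι ι R}
    (hX : X.IsSymm) (W : Matrix ι κ R) : (Wᵀ * X * W).IsSymm := by
  simp only [IsSymm, transpose_mul, transpose_transpose, hX.eq, Matrix.mul_assoc]

theorem mul_mul_inv_add_transpose_eq_two_smul [CommRing R] [Fintype κ] [DecidableEq κ]
    {X : Matrix ι ι R} (hX : X.IsSymm) (W : Matrix ι κ R) :
    X * W * (Wᵀ * X * W)⁻¹ + Xᵀ * W * (Wᵀ * X * W)⁻¹ᵀ = (2 : R) • (X * W * (Wᵀ * X * W)⁻¹) := by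
  rw [hX.eq, (isSymm_transpose_mul_mul hX W).inv.eq, two_smul]

/-- The derivative `H ↦ WᵀXH + HᵀXW` of the congruence `V ↦ VᵀXV` at `W`. -/
def transposeMulMulDeriv [CommSemiring R] [TopologicalSpace R] [IsTopologicalSemiring R]
    (X : Matrix ι ι R) (W : Matrix ι κ R) : Matrix ι κ R →L[R] Matrix κ κ R where
  toFun H := Wᵀ * X * H + Hᵀ * X * W
  map_add' H₁ H₂ := by
    simp only [transpose_add, Matrix.mul_add, Matrix.add_mul, add_add_add_comm]
  map_smul' c H := by
    simp only [transpose_smul, Matrix.mul_smul, Matrix.smul_mul, smul_add, RingHom.id_apply]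
  cont := by fun_prop

theorem hasFDerivAt_transpose_mul_mul {𝕜 : Type*} [NontriviallyNormedField 𝕜] [CompleteSpace 𝕜]
    [Finite κ] (X : Matrix ι ι 𝕜) (W : Matrix ι κ 𝕜) :
    HasFDerivAt (fun V : Matrix ι κ 𝕜 => Vᵀ * X * V) (transposeMulMulDeriv X W) W := by
  cases nonempty_fintype κ
  let B : Matrix ι κ 𝕜 →ₗ[𝕜] Matrix ι κ 𝕜 →ₗ[𝕜] Matrix κ κ 𝕜 :=
    LinearMap.mk₂ 𝕜 (fun U V => Uᵀ * X * V)
      (fun U₁ U₂ V => by simp only [transpose_add, Matrix.add_mul])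
      (fun c U V => by simp only [transpose_smul, Matrix.smul_mul])
      (fun U V₁ V₂ => Matrix.mul_add _ _ _)
      (fun c U V => Matrix.mul_smul _ _ _)
  exact (B.toContinuousBilinearMap.hasFDerivAt_of_bilinear
    (hasFDerivAt_id W) (hasFDerivAt_id W)).congr_fderiv rfl

end Congruence

theorem logDetDerivative_eq_traceMulCLM {n m : ℕ} {X : Matrix (Fin n) (Fin n) ℝ} (hX : X.IsSymm)
    (W : Matrix (Fin n) (Fin m) ℝ) :
    logDetDerivative X W = traceMulCLM ((2 : ℝ) • (X * W * (Wᵀ * X * W)⁻¹))ᵀ := by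
  ext1 H
  change 2 * ((Wᵀ * X * W)⁻¹ * (Wᵀ * X * H)).trace = _
  simp only [traceMulCLM_apply, transpose_smul, Matrix.smul_mul, trace_smul, smul_eq_mul,
    transpose_mul, transpose_nonsing_inv, transpose_transpose, hX.eq, Matrix.mul_assoc]

theorem hasFDerivAt_log_det_conj_general {ι κ : Type*} [Fintype ι] [Fintype κ] [DecidableEq κ]
    (X : Matrix ι ι ℝ) (W : Matrix ι κ ℝ) (hW : IsUnit (Wᵀ * X * W).det) :
    HasFDerivAt (fun V : Matrix ι κ ℝ => Real.log |(Vᵀ * X * V).det|)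
      (traceMulCLM (X * W * (Wᵀ * X * W)⁻¹ + Xᵀ * W * (Wᵀ * X * W)⁻¹ᵀ)ᵀ) W := by
  refine (HasFDerivAt.comp (f := fun V : Matrix ι κ ℝ => Vᵀ * X * V) W
    (hasFDerivAt_log_abs_det hW) (hasFDerivAt_transpose_mul_mul X W)).congr_fderiv ?_
  ext1 H
  set A := Wᵀ * X * W
  calc (A⁻¹ * (Wᵀ * X * H + Hᵀ * X * W)).trace
      = (A⁻¹ * (Wᵀ * X * H)).trace + (A⁻¹ * (Hᵀ * (X * W))).trace := by
        rw [Matrix.mul_add, trace_add, Matrix.mul_assoc Hᵀ]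
    _ = (A⁻¹ * (Wᵀ * X * H)).trace + ((X * W * A⁻¹)ᵀ * H).trace := by
        rw [trace_mul_transpose_mul]
    _ = ((X * W * A⁻¹ + Xᵀ * W * A⁻¹ᵀ)ᵀ * H).trace := by
        simp only [transpose_add, transpose_mul, transpose_transpose, Matrix.add_mul, trace_add,
          Matrix.mul_assoc, add_comm]

/-- Let `X` be an `n × n` real symmetric positive definite matrix and `W` an `n × m`
real matrix such that `WᵀXW` is invertible. Then `W ↦ log det(WᵀXW)` is Fréchet
differentiable at `W` with derivative `H ↦ 2 Tr((WᵀXW)⁻¹ Wᵀ X H)`; equivalently, the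
matrix of partial derivatives equals `2XW(WᵀXW)⁻¹`, i.e. the derivative in direction `H`
is `Tr((2XW(WᵀXW)⁻¹)ᵀ H)`. -/
theorem hasFDerivAt_log_det_conj {n m : ℕ}
    (X : Matrix (Fin n) (Fin n) ℝ) (hX : X.PosDef)
    (W : Matrix (Fin n) (Fin m) ℝ) (hW : IsUnit (Wᵀ * X * W).det) :
    HasFDerivAt (fun V : Matrix (Fin n) (Fin m) ℝ => Real.log ((Vᵀ * X * V).det))
      (logDetDerivative X W) W ∧
    ∀ H : Matrix (Fin n) (Fin m) ℝ,
      logDetDerivative X W H = (((2 : ℝ) • (X * W * (Wᵀ * X * W)⁻¹))ᵀ * H).trace := by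
  have hXs : X.IsSymm := isHermitian_iff_isSymm.mp hX.isHermitian
  rw [logDetDerivative_eq_traceMulCLM hXs, ← mul_mul_inv_add_transpose_eq_two_smul hXs]
  exact ⟨by simpa only [Real.log_abs] using hasFDerivAt_log_det_conj_general X W hW, fun _ => rfl⟩
end

section
/- Asymptotic equality of the AIRM and Jeffrey divergences at the identity along diagonal directions: let ν ∈ ℝⁿ be nonzero. Then lim_{t→0} [t² Σᵢ νᵢ²] / [(1/2)Σᵢ exp(tνᵢ) + (1/2)Σᵢ exp(−tνᵢ) − n] = 2. Here the numerator equals δ_R²(Iₙ, Diag(exp(tνᵢ))) and the denominator equals δ_J²(Iₙ, Diag(exp(tνᵢ))). -/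
open Filter Topology

/-!
Writing a positive diagonal matrix as `Diag(exp x₁, …, exp xₙ)`, its squared Jeffrey divergence from
the identity is the sum of `cosh xᵢ - 1 = 2 sinh² (xᵢ / 2)`, and each summand is asymptotic to
`xᵢ² / 2` as `x → 0`. Since squares are nonnegative, nothing cancels when these equivalences are
added, so the ratio to `∑ xᵢ²` converges however `x` tends to `0`; the theorem restricts this to the
line `x = t ν`.
-/

open Asymptotics

theorem isEquivalent_finsetSum_of_nonneg {ι α : Type*} {l : Filter α} {s : Finset ι}
    {u v : ι → α → ℝ} (hv : ∀ i ∈ s, 0 ≤ v i) (h : ∀ i ∈ s, u i ~[l] v i) :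
    (fun a ↦ ∑ i ∈ s, u i a) ~[l] fun a ↦ ∑ i ∈ s, v i a := by
  have h_norm : (fun a ↦ ∑ i ∈ s, ‖v i a‖) = fun a ↦ ∑ i ∈ s, v i a :=
    funext fun a ↦ s.sum_congr rfl fun i hi ↦ Real.norm_of_nonneg (hv i hi a)
  have h_diff := IsLittleO.sum_congr fun i hi ↦ (h i hi).isLittleO
  rw [h_norm] at h_diff
  simpa [IsEquivalent, Pi.sub_def, Finset.sum_sub_distrib] using h_diff

theorem tendsto_smul_const_nhdsNE {𝕜 E : Type*} [Semiring 𝕜] [IsCancelMulZero 𝕜]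
    [TopologicalSpace 𝕜] [AddCommMonoid E] [TopologicalSpace E] [Module 𝕜 E]
    [Module.IsTorsionFree 𝕜 E] [ContinuousSMul 𝕜 E] {v : E} (hv : v ≠ 0) :
    Tendsto (fun t : 𝕜 ↦ t • v) (𝓝[≠] 0) (𝓝[≠] 0) := by
  have h_cont : ContinuousWithinAt (fun t : 𝕜 ↦ t • v) {0}ᶜ 0 := by fun_prop
  simpa using h_cont.tendsto_nhdsWithin fun t ht ↦ smul_ne_zero ht hv

theorem cosh_sub_one_eq_two_mul_sinh_half_sq (x : ℝ) :
    Real.cosh x - 1 = 2 * Real.sinh (x / 2) ^ 2 := by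
  obtain ⟨y, rfl⟩ : ∃ y, x = 2 * y := ⟨x / 2, by ring⟩
  rw [Real.cosh_two_mul, Real.cosh_sq, mul_div_cancel_left₀ y two_ne_zero]
  ring

theorem isEquivalent_cosh_sub_one :
    (fun x ↦ Real.cosh x - 1) ~[𝓝 0] fun x ↦ x ^ 2 / 2 := by
  have h_half : Tendsto (fun x : ℝ ↦ x / 2) (𝓝 0) (𝓝 0) := by
    simpa using (continuous_id.div_const (2 : ℝ)).tendsto 0
  have h_sq : (fun x ↦ 2 * Real.sinh (x / 2) ^ 2) ~[𝓝 0] fun x ↦ 2 * (x / 2) ^ 2 :=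
    IsEquivalent.refl.mul ((Real.isEquivalent_sinh.comp_tendsto h_half).pow 2)
  convert h_sq using 2 with x x
  · exact cosh_sub_one_eq_two_mul_sinh_half_sq x
  · ring

theorem isEquivalent_sum_cosh_sub_one {ι : Type*} (s : Finset ι) :
    (fun x : ι → ℝ ↦ ∑ i ∈ s, (Real.cosh (x i) - 1)) ~[𝓝 0] fun x ↦ (∑ i ∈ s, x i ^ 2) / 2 := by
  simp only [Finset.sum_div]
  refine isEquivalent_finsetSum_of_nonneg (fun i _ x ↦ by positivity) fun i _ ↦ ?_
  exact isEquivalent_cosh_sub_one.comp_tendsto ((continuous_apply i).tendsto 0)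

theorem sum_cosh_sub_one_eq {ι : Type*} (s : Finset ι) (x : ι → ℝ) :
    ∑ i ∈ s, (Real.cosh (x i) - 1) =
      (1 / 2) * ∑ i ∈ s, Real.exp (x i) + (1 / 2) * ∑ i ∈ s, Real.exp (-x i) - s.card := by
  simp only [Real.cosh_eq, Finset.sum_sub_distrib, ← Finset.sum_div, Finset.sum_add_distrib,
    Finset.sum_const, nsmul_one]
  ring

theorem airm_jeffrey_limit_general {ι : Type*} [Fintype ι] :
    Tendsto
      (fun x : ι → ℝ ↦
        (∑ i, x i ^ 2) /
          ((1 / 2) * ∑ i, Real.exp (x i) + (1 / 2) * ∑ i, Real.exp (-x i) - Fintype.card ι))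
      (𝓝[≠] 0) (𝓝 2) := by
  have h_ne : ∀ᶠ x : ι → ℝ in 𝓝[≠] 0, (∑ i, x i ^ 2) / 2 ≠ 0 := by
    filter_upwards [self_mem_nhdsWithin] with x (hx : x ≠ 0)
    obtain ⟨i, hi⟩ := Function.ne_iff.1 hx
    have h_pos : 0 < ∑ j, x j ^ 2 :=
      Finset.sum_pos' (fun j _ ↦ sq_nonneg (x j)) ⟨i, Finset.mem_univ i, sq_pos_of_ne_zero hi⟩
    positivity
  have h_ratio : Tendsto (fun x : ι → ℝ ↦ (∑ i, (Real.cosh (x i) - 1)) / ((∑ i, x i ^ 2) / 2))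
      (𝓝[≠] 0) (𝓝 1) :=
    (isEquivalent_iff_tendsto_one h_ne).1
      ((isEquivalent_sum_cosh_sub_one Finset.univ).mono nhdsWithin_le_nhds)
  simp only [← Finset.card_univ, ← sum_cosh_sub_one_eq]
  convert (h_ratio.inv₀ one_ne_zero).const_mul 2 using 2 with x
  · rw [inv_div]
    ring
  · norm_num

/-- Asymptotic equality of the AIRM and Jeffrey divergences at the identity along
diagonal directions: for a nonzero `ν ∈ ℝⁿ`,
`lim_{t→0} [t² Σᵢ νᵢ²] / [(1/2)Σᵢ exp(tνᵢ) + (1/2)Σᵢ exp(−tνᵢ) − n] = 2`.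
The numerator is `δ_R²(Iₙ, Diag(exp(tνᵢ)))` and the denominator is
`δ_J²(Iₙ, Diag(exp(tνᵢ)))`. -/
theorem airm_jeffrey_limit {n : ℕ} (ν : Fin n → ℝ) (hν : ν ≠ 0) :
    Tendsto
      (fun t : ℝ =>
        (t ^ 2 * ∑ i, (ν i) ^ 2) /
          ((1 / 2) * ∑ i, Real.exp (t * ν i) +
            (1 / 2) * ∑ i, Real.exp (-(t * ν i)) - n))
      (𝓝[≠] 0) (𝓝 2) := by
  simpa [Function.comp_def, mul_pow, ← Finset.mul_sum] using
    airm_jeffrey_limit_general.comp (tendsto_smul_const_nhdsNE (𝕜 := ℝ) hν)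
end

section
/- Asymptotic equality of the AIRM and Stein divergences at the identity along diagonal directions: let ν ∈ ℝⁿ be nonzero. Then lim_{t→0} [t² Σᵢ νᵢ²] / [Σᵢ log((1 + exp(tνᵢ))/2) − (t/2) Σᵢ νᵢ] = 8. Here the numerator equals δ_R²(Iₙ, Diag(exp(tνᵢ))) and the denominator equals δ_S²(Iₙ, Diag(exp(tνᵢ))). -/
open Filter Topology

/-!
The Stein divergence of `1` and `exp x` is `log ((1 + exp x) / 2) - x / 2 = log (cosh (x / 2))`.
Since `cosh² = 1 + sinh²`, it is half of `log (1 + sinh² (x / 2))`, hence equivalent to `x² / 8` as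
`x → 0`. At `x = t νᵢ` the error is `o(t²)`, so the sum over `i` is equivalent to `t² ∑ᵢ νᵢ² / 8`
as soon as `∑ᵢ νᵢ² ≠ 0`.
-/

open Asymptotics

theorem isEquivalent_log_one_add : (fun u : ℝ => Real.log (1 + u)) ~[𝓝 0] id := by
  have hderiv : HasDerivAt (fun u : ℝ => Real.log (1 + u)) 1 0 := by
    simpa using ((hasDerivAt_id (0 : ℝ)).const_add 1).log (by simp)
  simpa [IsEquivalent, Pi.sub_def] using! hderiv.isLittleO

theorem two_mul_log_cosh (y : ℝ) :
    2 * Real.log (Real.cosh y) = Real.log (1 + Real.sinh y ^ 2) := by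
  rw [add_comm, ← Real.cosh_sq, Real.log_pow, Nat.cast_ofNat]

theorem isEquivalent_log_cosh :
    (fun y : ℝ => Real.log (Real.cosh y)) ~[𝓝 0] fun y => y ^ 2 / 2 := by
  have hsinh : Tendsto (fun y : ℝ => Real.sinh y ^ 2) (𝓝 0) (𝓝 0) :=
    Continuous.tendsto' (by fun_prop) 0 0 (by simp)
  have hlog : (fun y : ℝ => Real.log (1 + Real.sinh y ^ 2)) ~[𝓝 0] fun y => y ^ 2 :=
    (isEquivalent_log_one_add.comp_tendsto hsinh).trans (Real.isEquivalent_sinh.pow 2)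
  have hhalf := hlog.div (IsEquivalent.refl (u := fun _ : ℝ => (2 : ℝ)))
  refine hhalf.congr_left (Eventually.of_forall fun y => ?_)
  simp only [Pi.div_apply, ← two_mul_log_cosh, mul_div_cancel_left₀ _ (two_ne_zero' ℝ)]

theorem log_one_add_exp_div_two_sub_half (x : ℝ) :
    Real.log ((1 + Real.exp x) / 2) - x / 2 = Real.log (Real.cosh (x / 2)) := by
  have hfactor : (1 + Real.exp x) / 2 = Real.exp (x / 2) * Real.cosh (x / 2) := by
    rw [Real.cosh_eq, mul_div_assoc', mul_add, ← Real.exp_add, ← Real.exp_add, add_halves,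
      add_neg_cancel, Real.exp_zero, add_comm]
  rw [hfactor, Real.log_mul (Real.exp_ne_zero _) (Real.cosh_pos _).ne', Real.log_exp,
    add_sub_cancel_left]

theorem isEquivalent_log_one_add_exp_div_two_sub_half :
    (fun x : ℝ => Real.log ((1 + Real.exp x) / 2) - x / 2) ~[𝓝 0] fun x => 1 / 8 * x ^ 2 := by
  have hhalf : Tendsto (fun x : ℝ => x / 2) (𝓝 0) (𝓝 0) :=
    Continuous.tendsto' (by fun_prop) 0 0 (zero_div 2)
  refine ((isEquivalent_log_cosh.comp_tendsto hhalf).congr_left ?_).congr_right ?_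
  · exact Eventually.of_forall fun x => (log_one_add_exp_div_two_sub_half x).symm
  · exact Eventually.of_forall fun x => by simp only [Function.comp_apply]; ring

theorem isEquivalent_sum_comp_mul {𝕜 ι : Type*} [NormedField 𝕜] {f : 𝕜 → 𝕜} {c : 𝕜} {k : ℕ}
    (hf : f ~[𝓝 0] fun x => c * x ^ k) (s : Finset ι) (a : ι → 𝕜)
    (ha : ∑ i ∈ s, a i ^ k ≠ 0) :
    (fun t => ∑ i ∈ s, f (t * a i)) ~[𝓝 0] fun t => c * (t ^ k * ∑ i ∈ s, a i ^ k) := by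
  have hterm (i : ι) :
      (fun t => f (t * a i) - c * (t * a i) ^ k) =o[𝓝 0] fun t => c * t ^ k := by
    have hscale : Tendsto (fun t => t * a i) (𝓝 0) (𝓝 0) :=
      Continuous.tendsto' (by fun_prop) 0 0 (zero_mul _)
    refine (hf.isLittleO.comp_tendsto hscale).trans_isBigO ?_
    refine (isBigO_const_mul_self (a i ^ k) (fun t => c * t ^ k) _).congr_left fun t => ?_
    simp only [Function.comp_apply]
    ring
  have hsum : (fun t => ∑ i ∈ s, (f (t * a i) - c * (t * a i) ^ k)) =o[𝓝 0]
      fun t => (∑ i ∈ s, a i ^ k) * (c * t ^ k) :=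
    (isLittleO_const_mul_right_iff ha).2 (IsLittleO.fun_sum fun i _ => hterm i)
  refine hsum.congr (fun t => ?_) fun t => by ring
  simp only [Pi.sub_apply, Finset.sum_sub_distrib, mul_pow, Finset.mul_sum]

theorem airm_stein_limit_general {ι : Type*} [Fintype ι] (ν : ι → ℝ) (hν : ν ≠ 0) :
    Tendsto
      (fun t : ℝ =>
        (t ^ 2 * ∑ i, (ν i) ^ 2) /
          ((∑ i, Real.log ((1 + Real.exp (t * ν i)) / 2)) - (t / 2) * ∑ i, ν i))
      (𝓝[≠] 0) (𝓝 8) := by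
  have hsq : ∑ i, ν i ^ 2 ≠ 0 := by
    simpa [Finset.sum_eq_zero_iff_of_nonneg, sq_nonneg, funext_iff] using hν
  have hstein : (fun t : ℝ => (∑ i, Real.log ((1 + Real.exp (t * ν i)) / 2)) - t / 2 * ∑ i, ν i)
      ~[𝓝[≠] 0] fun t => 1 / 8 * (t ^ 2 * ∑ i, ν i ^ 2) := by
    have hsum :=
      isEquivalent_sum_comp_mul isEquivalent_log_one_add_exp_div_two_sub_half Finset.univ ν hsq
    simpa only [Finset.sum_sub_distrib, ← Finset.sum_div, ← Finset.mul_sum, mul_div_right_comm]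
      using hsum.mono nhdsWithin_le_nhds
  refine IsEquivalent.tendsto_const ((IsEquivalent.refl.div hstein).congr_right ?_)
  filter_upwards [self_mem_nhdsWithin] with t (ht : t ≠ 0)
  simp only [Pi.div_apply, Function.const_apply]
  field_simp

/-- Asymptotic equality of the AIRM and Stein divergences at the identity along
diagonal directions: for a nonzero `ν ∈ ℝⁿ`,
`lim_{t→0} [t² Σᵢ νᵢ²] / [Σᵢ log((1 + exp(tνᵢ))/2) − (t/2) Σᵢ νᵢ] = 8`.
The numerator is `δ_R²(Iₙ, Diag(exp(tνᵢ)))` and the denominator is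
`δ_S²(Iₙ, Diag(exp(tνᵢ)))`. -/
theorem airm_stein_limit {n : ℕ} (ν : Fin n → ℝ) (hν : ν ≠ 0) :
    Tendsto
      (fun t : ℝ =>
        (t ^ 2 * ∑ i, (ν i) ^ 2) /
          ((∑ i, Real.log ((1 + Real.exp (t * ν i)) / 2)) - (t / 2) * ∑ i, ν i))
      (𝓝[≠] 0) (𝓝 8) :=
  airm_stein_limit_general ν hν
end
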